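/- Let Φ be a collection of clauses C_1, …, C_m, each containing three literals, and let G(Φ) be the graph constructed from Φ as described. Then G(Φ) has a two-coloured perfect matching if and only if the literals can be assigned values true or false so that every clause of Φ contains at least one true literal and at least one false literal. -/

import Mathlib

/-- A two-coloured perfect matching of `G`: a two-colouring (black/white, modelled by
`Bool`) of the vertices in which every vertex has exactly one neighbour of the same
colour. -/
def IsTCPM {V : Type*} (G : SimpleGraph V) (c : V → Bool) : Prop :=
  ∀ v, ∃! w, G.Adj v w ∧ c w = c v

/-- The vertices of one copy of `H` that survive in the graph `G(Φ)`: the vertices of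
`H` other than `a`, `m`, `n` (deleted/identified when forming the clause gadget `K`)
and other than the degree-one vertices `q`, `r` (deleted when joining clause gadgets). -/
inductive GHV | b | c | d | e | f | g | h | i | j | k | l | o | p
deriving DecidableEq

/-- The vertices of the graph `G(Φ)` for an instance with `m` clauses: for each clause
`i` a vertex `a i` (the identified vertex of the clause gadget `K(Cᵢ)`) and a copy
`v i t x` of each surviving vertex `x` of `H`, for each of the three subgraphs
`H_t` of `K(Cᵢ)`. -/
inductive GV (m : ℕ)
| a (i : Fin m)
| v (i : Fin m) (t : Fin 3) (x : GHV)

open GHV in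
/-- The edges of `H` not incident to any of `a`, `m`, `n`, `q`, `r`. -/
def GCopyEdges : List (GHV × GHV) :=
  [(b,c),(b,d),(c,e),(c,f),(e,f),(d,g),(d,h),(g,h),(e,i),(f,j),(g,k),
   (h,l),(j,k),(i,o),(j,o),(k,p),(l,p)]

/-- The adjacency generating relation of the graph `G(Φ)`, where the cyclic order of
the occurrences of each literal is recorded by the successor function `next` on
occurrences (pairs (clause, position)):
* the edges `a bₜ` and the copies of the edges of `H` inside each clause gadget;
* the edges `l₁i₂`, `l₂i₃`, `l₃i₁` inside each clause gadget;
* for each occurrence `s`, an identifying edge joining the vertex `p` of the occurrence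
  `s` (the former neighbour of the deleted degree-one vertex `r` of `s`) to the vertex
  `o` of the occurrence `next s` (the former neighbour of the deleted degree-one vertex
  `q` of `next s`). -/
def GPhiAdj (m : ℕ) (next : Fin m × Fin 3 → Fin m × Fin 3) :
    GV m → GV m → Prop := fun x y =>
  (∃ i t, x = GV.a i ∧ y = GV.v i t GHV.b) ∨
  (∃ i t x' y', x = GV.v i t x' ∧ y = GV.v i t y' ∧ (x', y') ∈ GCopyEdges) ∨
  (∃ i t, x = GV.v i t GHV.l ∧ y = GV.v i (t + 1) GHV.i) ∨
  (∃ s : Fin m × Fin 3,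
    x = GV.v s.1 s.2 GHV.p ∧ y = GV.v (next s).1 (next s).2 GHV.o)

/-- The graph `G(Φ)` constructed from an instance of Not-All-Equal 3SAT. -/
def GPhi (m : ℕ) (next : Fin m × Fin 3 → Fin m × Fin 3) : SimpleGraph (GV m) :=
  SimpleGraph.fromRel (GPhiAdj m next)


/-- exactly one of `u, v, w` equals `x` -/
def X1 (x u v w : Bool) : Bool :=
  (u == x && v != x && w != x) || (u != x && v == x && w != x) || (u != x && v != x && w == x)

lemma exUnique_iff {V : Type*} (G : SimpleGraph V) (c : V → Bool) (v u₁ u₂ u₃ : V)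
    (h : ∀ w, G.Adj v w ↔ w = u₁ ∨ w = u₂ ∨ w = u₃)
    (h12 : u₁ ≠ u₂) (h13 : u₁ ≠ u₃) (h23 : u₂ ≠ u₃) :
    (∃! w, G.Adj v w ∧ c w = c v) ↔ X1 (c v) (c u₁) (c u₂) (c u₃) = true := by
  simp only [h, ExistsUnique, X1, Bool.or_eq_true, Bool.and_eq_true, beq_iff_eq, bne_iff_ne]
  constructor
  · rintro ⟨w, ⟨hw, hc⟩, huniq⟩
    have e1 : c u₁ = c v → u₁ = w := fun h => huniq u₁ ⟨Or.inl rfl, h⟩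
    have e2 : c u₂ = c v → u₂ = w := fun h => huniq u₂ ⟨Or.inr (Or.inl rfl), h⟩
    have e3 : c u₃ = c v → u₃ = w := fun h => huniq u₃ ⟨Or.inr (Or.inr rfl), h⟩
    rcases hw with rfl | rfl | rfl
    · exact Or.inl (Or.inl ⟨⟨hc, fun h => h12 (e2 h).symm⟩, fun h => h13 (e3 h).symm⟩)
    · exact Or.inl (Or.inr ⟨⟨fun h => h12 (e1 h), hc⟩, fun h => h23 (e3 h).symm⟩)
    · exact Or.inr ⟨⟨fun h => h13 (e1 h), fun h => h23 (e2 h)⟩, hc⟩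
  · rintro ((⟨⟨h1, h2⟩, h3⟩ | ⟨⟨h1, h2⟩, h3⟩) | ⟨⟨h1, h2⟩, h3⟩)
    · refine ⟨u₁, ⟨by simp, h1⟩, ?_⟩
      rintro y ⟨rfl | rfl | rfl, hy⟩
      · rfl
      · exact absurd hy h2
      · exact absurd hy h3
    · refine ⟨u₂, ⟨by simp, h2⟩, ?_⟩
      rintro y ⟨rfl | rfl | rfl, hy⟩
      · exact absurd hy h1
      · rfl
      · exact absurd hy h3
    · refine ⟨u₃, ⟨by simp, h3⟩, ?_⟩
      rintro y ⟨rfl | rfl | rfl, hy⟩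
      · exact absurd hy h1
      · exact absurd hy h2
      · rfl

/-- The three neighbours of a vertex. -/
def nb {m : ℕ} (E : Fin m × Fin 3 ≃ Fin m × Fin 3) : GV m → GV m × GV m × GV m
  | .a i => (.v i 0 .b, .v i 1 .b, .v i 2 .b)
  | .v i t .b => (.a i, .v i t .c, .v i t .d)
  | .v i t .c => (.v i t .b, .v i t .e, .v i t .f)
  | .v i t .d => (.v i t .b, .v i t .g, .v i t .h)
  | .v i t .e => (.v i t .c, .v i t .f, .v i t .i)
  | .v i t .f => (.v i t .c, .v i t .e, .v i t .j)
  | .v i t .g => (.v i t .d, .v i t .h, .v i t .k)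
  | .v i t .h => (.v i t .d, .v i t .g, .v i t .l)
  | .v i t .i => (.v i t .e, .v i t .o, .v i (t + 2) .l)
  | .v i t .j => (.v i t .f, .v i t .k, .v i t .o)
  | .v i t .k => (.v i t .g, .v i t .j, .v i t .p)
  | .v i t .l => (.v i t .h, .v i t .p, .v i (t + 1) .i)
  | .v i t .o => (.v i t .i, .v i t .j, .v (E.symm (i, t)).1 (E.symm (i, t)).2 .p)
  | .v i t .p => (.v i t .k, .v i t .l, .v (E (i, t)).1 (E (i, t)).2 .o)

lemma fin3_shift (s t : Fin 3) : t = s + 1 ↔ s = t + 2 := by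
  revert s t; decide

lemma fin3_cases (t : Fin 3) : t = 0 ∨ t = 1 ∨ t = 2 := by
  revert t; decide

lemma next_iff {m : ℕ} (E : Fin m × Fin 3 ≃ Fin m × Fin 3) (i j : Fin m) (t s : Fin 3) :
    (i = (E (j, s)).1 ∧ t = (E (j, s)).2) ↔ (j = (E.symm (i, t)).1 ∧ s = (E.symm (i, t)).2) := by
  have h1 : (i = (E (j, s)).1 ∧ t = (E (j, s)).2) ↔ (i, t) = E (j, s) := by
    rw [Prod.ext_iff]
  have h2 : (j = (E.symm (i, t)).1 ∧ s = (E.symm (i, t)).2) ↔ (j, s) = E.symm (i, t) := by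
    rw [Prod.ext_iff]
  rw [h1, h2, Equiv.eq_symm_apply, eq_comm]

set_option maxHeartbeats 4000000 in
lemma adj_iff {m : ℕ} (E : Fin m × Fin 3 ≃ Fin m × Fin 3) (v w : GV m) :
    (GPhi m E).Adj v w ↔ w = (nb E v).1 ∨ w = (nb E v).2.1 ∨ w = (nb E v).2.2 := by
  rcases v with i | ⟨i, t, x⟩ <;> rcases w with j | ⟨j, s, y⟩
  · simp [GPhi, GPhiAdj, nb]
  · have := fin3_cases s
    cases y <;> simp [GPhi, GPhiAdj, nb] <;> grind
  · cases x <;> simp [GPhi, GPhiAdj, nb] <;> grind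
  · have h1 := fin3_shift s t
    have h2 := next_iff E i j t s
    cases x <;> cases y <;> simp [GPhi, GPhiAdj, nb, GCopyEdges] <;> grind

lemma nb_ne {m : ℕ} (E : Fin m × Fin 3 ≃ Fin m × Fin 3) (v : GV m) :
    (nb E v).1 ≠ (nb E v).2.1 ∧ (nb E v).1 ≠ (nb E v).2.2 ∧ (nb E v).2.1 ≠ (nb E v).2.2 := by
  rcases v with i | ⟨i, t, x⟩
  · simp [nb]
  · cases x <;> simp [nb]

lemma tcpm_iff {m : ℕ} (E : Fin m × Fin 3 ≃ Fin m × Fin 3) (c : GV m → Bool) :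
    IsTCPM (GPhi m E) c ↔
      ∀ v, X1 (c v) (c (nb E v).1) (c (nb E v).2.1) (c (nb E v).2.2) = true := by
  refine forall_congr' fun v => ?_
  obtain ⟨h12, h13, h23⟩ := nb_ne E v
  exact exUnique_iff _ c v _ _ _ (adj_iff E v) h12 h13 h23

/-- The analysis of the gadget `H`. -/
lemma gadget : ∀ a b c d, X1 b a c d = true → ∀ e f, X1 c b e f = true →
    ∀ g h, X1 d b g h = true → ∀ i, X1 e c f i = true → ∀ j, X1 f c e j = true →
    ∀ k, X1 g d h k = true → ∀ l, X1 h d g l = true → ∀ o, X1 j f k o = true →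
    ∀ p, X1 k g j p = true → ∀ m, X1 i e o m = true → ∀ n, X1 l h p n = true →
    ∀ q, X1 o i j q = true → ∀ r, X1 p k l r = true →
    (o = p ∧ q = o ∧ r = p ∧ o = (if b = a then !a else a)) := by
  decide

/-- The three types of colourings of a copy of `H`. -/
inductive Knd | A | B | C
deriving DecidableEq

/-- The colour of a vertex of a copy of the given type, when `a` is coloured `false`. -/
def pat : Knd → GHV → Bool
  | .A, .c => true | .A, .d => true | .A, .f => true | .A, .g => true
  | .A, .o => true | .A, .p => true | .A, _ => false
  | .B, .b => true | .B, .d => true | .B, .e => true | .B, .i => true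
  | .B, .j => true | .B, .k => true | .B, .l => true | .B, _ => false
  | .C, .b => true | .C, .c => true | .C, .h => true | .C, .i => true
  | .C, .j => true | .C, .k => true | .C, .l => true | .C, _ => false

/-- The type of a copy from the values of its literal and the next two. -/
def knd (x y z : Bool) : Knd := if x = y then .B else if x = z then .C else .A

/-- majority -/
def maj (x y z : Bool) : Bool := if x = y then x else z

/-- The colouring obtained from values of the occurrences. -/
def col {m : ℕ} (τ : Fin m → Fin 3 → Bool) : GV m → Bool
  | .a i => maj (τ i 0) (τ i 1) (τ i 2)
  | .v i t x => xor (pat (knd (τ i t) (τ i (t + 1)) (τ i (t + 2))) x)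
      (maj (τ i 0) (τ i 1) (τ i 2))

lemma col_op {m : ℕ} (τ : Fin m → Fin 3 → Bool)
    (h : ∀ i, (∃ t, τ i t = true) ∧ (∃ t, τ i t = false)) (i : Fin m) (t : Fin 3) :
    col τ (.v i t .o) = τ i t ∧ col τ (.v i t .p) = τ i t := by
  have h := h i
  simp only [col]
  generalize τ i = f at *
  revert f t; decide

lemma col_ok {m : ℕ} (E : Fin m × Fin 3 ≃ Fin m × Fin 3) (τ : Fin m → Fin 3 → Bool)
    (h : ∀ i, (∃ t, τ i t = true) ∧ (∃ t, τ i t = false))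
    (hE : ∀ s, τ (E s).1 (E s).2 = τ s.1 s.2) (v : GV m) :
    X1 (col τ v) (col τ (nb E v).1) (col τ (nb E v).2.1) (col τ (nb E v).2.2) = true := by
  rcases v with i | ⟨i, t, x⟩
  · have h := h i
    simp only [col, nb]
    generalize τ i = f at *
    revert f; decide
  · have hi := h i
    have hs := hE (E.symm (i, t))
    rw [Equiv.apply_symm_apply] at hs
    have hs' := hE (i, t)
    cases x
    case o =>
      simp only [nb, (col_op τ h _ _).2, ← hs]
      simp only [col]
      generalize τ i = f at *
      clear hs hs' h hE
      revert f t; decide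
    case p =>
      simp only [nb, (col_op τ h (E _).1 _).1, hs']
      simp only [col]
      generalize τ i = f at *
      clear hs hs' h hE
      revert f t; decide
    all_goals
      simp only [col, nb]
      generalize τ i = f at *
      clear hs hs' h hE
      revert f t; decide

/-- Let `Φ` be a collection of `m` clauses, each with three literals (literals taken
from a type `X`), given by `Φ : Fin m → Fin 3 → X`, and let `next` be the cyclic
successor of the occurrences of each literal (a literal-preserving bijection of the
occurrences whose orbits are exactly the occurrence classes of the literals).  Then
the graph `G(Φ)` has a two-coloured perfect matching if and only if the literals can
be assigned values true or false so that every clause contains at least one true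
literal and at least one false literal. -/
theorem stmt_5 {X : Type*} (m : ℕ) (Φ : Fin m → Fin 3 → X)
    (next : Fin m × Fin 3 → Fin m × Fin 3)
    (hlit : ∀ s, Φ (next s).1 (next s).2 = Φ s.1 s.2)
    (hbij : Function.Bijective next)
    (hcyc : ∀ s t : Fin m × Fin 3, Φ s.1 s.2 = Φ t.1 t.2 → ∃ n : ℕ, next^[n] s = t) :
    (∃ c : GV m → Bool, IsTCPM (GPhi m next) c) ↔
    (∃ σ : X → Bool, ∀ i : Fin m,
      (∃ t, σ (Φ i t) = true) ∧ (∃ t, σ (Φ i t) = false)) := by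
  obtain ⟨E, rfl⟩ : ∃ E : Fin m × Fin 3 ≃ Fin m × Fin 3, next = E :=
    ⟨Equiv.ofBijective next hbij, rfl⟩
  constructor
  · rintro ⟨c, hc⟩
    rw [tcpm_iff] at hc
    have key : ∀ i t, c (.v i t .o) = c (.v i t .p) ∧
        c (.v (E (i, t)).1 (E (i, t)).2 .o) = c (.v i t .p) ∧
        c (.v i t .o) = (if c (.v i t .b) = c (.a i) then !c (.a i) else c (.a i)) := by
      intro i t
      have := gadget _ _ _ _ (hc (.v i t .b)) _ _ (hc (.v i t .c)) _ _ (hc (.v i t .d))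
        _ (hc (.v i t .e)) _ (hc (.v i t .f)) _ (hc (.v i t .g)) _ (hc (.v i t .h))
        _ (hc (.v i t .j)) _ (hc (.v i t .k)) _ (hc (.v i t .i)) _ (hc (.v i t .l))
        _ (hc (.v i t .o)) _ (hc (.v i t .p))
      exact ⟨this.1, this.2.2.1, this.2.2.2⟩
    have hstep : ∀ (n : ℕ) (s : Fin m × Fin 3),
        c (.v (E^[n] s).1 (E^[n] s).2 .o) = c (.v s.1 s.2 .o) := by
      intro n
      induction n with
      | zero => intro s; rfl
      | succ n ih =>
        intro s
        rw [Function.iterate_succ_apply, ih]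
        obtain ⟨k1, k2, -⟩ := key s.1 s.2
        rw [k1]; exact k2
    classical
    let σ : X → Bool := fun x => decide (∃ s : Fin m × Fin 3, Φ s.1 s.2 = x ∧
      c (.v s.1 s.2 .o) = true)
    have hσ : ∀ i t, σ (Φ i t) = c (.v i t .o) := by
      intro i t
      rw [Bool.eq_iff_iff]
      simp only [σ, decide_eq_true_eq]
      constructor
      · rintro ⟨s, hs, hcs⟩
        obtain ⟨n, hn⟩ := hcyc s (i, t) hs
        have := hstep n s
        rw [hn, hcs] at this
        exact this
      · intro h
        exact ⟨(i, t), rfl, h⟩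
    refine ⟨σ, fun i => ?_⟩
    have ha := hc (.a i)
    simp only [hσ, (key i _).2.2]
    simp only [nb] at ha
    generalize c (.a i) = x at *
    have aux : ∀ (x : Bool) (f : Fin 3 → Bool), X1 x (f 0) (f 1) (f 2) = true →
        (∃ t, (if f t = x then !x else x) = true) ∧
        (∃ t, (if f t = x then !x else x) = false) := by decide
    exact aux x (fun t => c (.v i t .b)) ha
  · rintro ⟨σ, hσ⟩
    refine ⟨col fun i t => σ (Φ i t), ?_⟩
    rw [tcpm_iff]
    exact col_ok E _ hσ (fun s => by simp only [hlit])
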